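/- Given a triangulation T of S and l ∈ ℝ^{E(T)}_Δ, the topology on S induced by the metric d[l] coincides with the original topology on S. -/

import Mathlib

noncomputable section

open Set
open scoped ENNReal

/-- The Euclidean plane `ℝ²` with the Euclidean metric. -/
abbrev E2 : Type := EuclideanSpace ℝ (Fin 2)

/-- Vertices of the fixed closed regular (equilateral) triangle of side length 1. -/
def p0 : E2 := !₂[0, 0]
def p1 : E2 := !₂[1, 0]
def p2 : E2 := !₂[1 / 2, Real.sqrt 3 / 2]

/-- `Dtri` is the fixed closed regular triangle in `ℝ²` with edge length 1. -/
def Dtri : Set E2 := convexHull ℝ {p0, p1, p2}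

/-- `V0` is the set of the three vertices of `Dtri`. -/
def V0 : Set E2 := {p0, p1, p2}

/-- The three closed edges of `Dtri`. -/
def e01 : Set E2 := segment ℝ p0 p1
def e12 : Set E2 := segment ℝ p1 p2
def e02 : Set E2 := segment ℝ p0 p2

/-- `E0` is the set of the three closed edges of `Dtri`. -/
def E0 : Set (Set E2) := {e01, e12, e02}

/-- The open edge `e° = e ∖ V₀`. -/
def eo (e : Set E2) : Set E2 := e \ V0

/-- `Do = D°` is the interior of `Dtri` in `ℝ²`. -/
def Do : Set E2 := interior Dtri

/-- `l : E₀ → ℝ` is positive and satisfies the strict triangle inequalities: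
`l e₁ + l e₂ > l e₃` whenever `{e₁, e₂, e₃} = E₀`. -/
def TriIneq (l : Set E2 → ℝ) : Prop :=
  (∀ e ∈ E0, 0 < l e) ∧
  ∀ e₁ e₂ e₃ : Set E2, ({e₁, e₂, e₃} : Set (Set E2)) = E0 → l e₁ + l e₂ > l e₃

/-- A linear map `f : ℝ² → ℝ²` realizes the edge lengths `l`, i.e. for each `e ∈ E₀`
the segment `f(e)` has Euclidean length `l e`. -/
def Realizes (f : E2 →ₗ[ℝ] E2) (l : Set E2 → ℝ) : Prop :=
  dist (f p0) (f p1) = l e01 ∧ dist (f p1) (f p2) = l e12 ∧ dist (f p0) (f p2) = l e02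

/-- The metric `d[l]` on `Dtri`, defined by `d[l](x,y) = |f x - f y|₂` for a linear map `f`
realizing the edge lengths `l` (this is independent of the choice of `f`). -/
def dD (l : Set E2 → ℝ) (x y : E2) : ℝ :=
  letI := Classical.propDecidable (∃ f : E2 →ₗ[ℝ] E2, Realizes f l)
  if h : ∃ f : E2 →ₗ[ℝ] E2, Realizes f l then dist (h.choose x) (h.choose y) else 0

/-- A triangulation `T = (σᵢ)_{i ∈ I}`, `I = Fin n`, of a topological space `S`:
a finite family of continuous maps `σᵢ : Dtri → S` such that
(a) `σᵢ` is injective on each open edge, (b) `σᵢ` is injective on `D°`,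
(c) `S` is the disjoint union of `⋃ᵢ σᵢ(V₀)`, the sets `σᵢ(D°)`, and the distinct sets
among the `σᵢ(e°)`, and (d) glued edges are identified by a linear homeomorphism. -/
structure Triangulation (S : Type) [TopologicalSpace S] (n : ℕ) where
  σ : Fin n → E2 → S
  continuousOn : ∀ i, ContinuousOn (σ i) Dtri
  inj_edge : ∀ i, ∀ e ∈ E0, InjOn (σ i) (eo e)
  inj_int : ∀ i, InjOn (σ i) Do
  cover : (⋃ i, σ i '' V0) ∪ (⋃ i, σ i '' Do) ∪ (⋃ i, ⋃ e ∈ E0, σ i '' eo e) = univ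
  disj_int : ∀ i j, i ≠ j → Disjoint (σ i '' Do) (σ j '' Do)
  disj_vert_int : ∀ j, Disjoint (⋃ i, σ i '' V0) (σ j '' Do)
  disj_vert_edge : ∀ j, ∀ e ∈ E0, Disjoint (⋃ i, σ i '' V0) (σ j '' eo e)
  disj_int_edge : ∀ i j, ∀ e ∈ E0, Disjoint (σ i '' Do) (σ j '' eo e)
  edge_eq_or_disjoint : ∀ i j, ∀ e ∈ E0, ∀ e' ∈ E0,
    σ i '' eo e = σ j '' eo e' ∨ Disjoint (σ i '' eo e) (σ j '' eo e')
  glue : ∀ i j, ∀ e ∈ E0, ∀ e' ∈ E0, σ i '' eo e = σ j '' eo e' →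
    ∃ A : E2 →ᵃ[ℝ] E2, A '' e = e' ∧ ∀ x ∈ e, σ j (A x) = σ i x

variable {S : Type} [TopologicalSpace S] {n : ℕ}

/-- `l ∈ ℝ^{E(T)}_Δ`: `l` assigns positive lengths to the edges of `T` satisfying the
strict triangle inequalities in each triangle. -/
def TriIneqT (T : Triangulation S n) (l : Set S → ℝ) : Prop :=
  (∀ (i : Fin n), ∀ e ∈ E0, 0 < l (T.σ i '' e)) ∧
  ∀ (i : Fin n), ∀ e₁ e₂ e₃ : Set E2, ({e₁, e₂, e₃} : Set (Set E2)) = E0 →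
    l (T.σ i '' e₁) + l (T.σ i '' e₂) > l (T.σ i '' e₃)

/-- The restricted edge lengths `l^{(i)}` on the triangle `σᵢ(D)`: `l^{(i)}_e = l_{σᵢ(e)}`. -/
def lRes (T : Triangulation S n) (l : Set S → ℝ) (i : Fin n) : Set E2 → ℝ :=
  fun e => l (T.σ i '' e)

/-- `dᵢ(x,y) = min { d[l^{(i)}](x',y') : x' ∈ σᵢ⁻¹(x), y' ∈ σᵢ⁻¹(y) }` for `x, y ∈ σᵢ(D)`. -/
def dTri (T : Triangulation S n) (l : Set S → ℝ) (i : Fin n) (x y : S) : ℝ :=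
  sInf { r | ∃ x' ∈ Dtri, ∃ y' ∈ Dtri,
    T.σ i x' = x ∧ T.σ i y' = y ∧ r = dD (lRes T l i) x' y' }

/-- The set of sums `Σ_j d_{i_j}(x_{j-1}, x_j)` over chains from `x` to `y`. -/
def chainSums (T : Triangulation S n) (l : Set S → ℝ) (x y : S) : Set ℝ :=
  { r | ∃ (k : ℕ) (c : ℕ → S) (idx : ℕ → Fin n),
      c 0 = x ∧ c k = y ∧
      (∀ j < k, c j ∈ T.σ (idx j) '' Dtri ∧ c (j + 1) ∈ T.σ (idx j) '' Dtri) ∧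
      r = ∑ j ∈ Finset.range k, dTri T l (idx j) (c j) (c (j + 1)) }

/-- The glued metric `d[l]` on `S`. -/
def dGlue (T : Triangulation S n) (l : Set S → ℝ) (x y : S) : ℝ :=
  sInf (chainSums T l x y)


def b1 (v : E2) : ℝ := v 0 - v 1 / Real.sqrt 3
def b2 (v : E2) : ℝ := 2 * v 1 / Real.sqrt 3

lemma s3 : Real.sqrt 3 * Real.sqrt 3 = 3 := Real.mul_self_sqrt (by norm_num)
lemma s3pos : 0 < Real.sqrt 3 := Real.sqrt_pos.2 (by norm_num)

lemma v_eq (v : E2) : v = (1 - b1 v - b2 v) • p0 + b1 v • p1 + b2 v • p2 := by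
  have h := s3pos.ne'
  ext i; fin_cases i <;> simp [p0, p1, p2, b1, b2] <;> field_simp <;> ring

lemma v_eq' (v : E2) : v = b1 v • p1 + b2 v • p2 := by
  have h := s3pos.ne'
  ext i; fin_cases i <;> simp [p1, p2, b1, b2] <;> field_simp <;> ring

lemma b1_comb (x y : E2) (a b : ℝ) : b1 (a • x + b • y) = a * b1 x + b * b1 y := by
  simp [b1]; ring
lemma b2_comb (x y : E2) (a b : ℝ) : b2 (a • x + b • y) = a * b2 x + b * b2 y := by
  simp [b2]; ring

lemma b1p1 : b1 p1 = 1 := by simp [b1, p1]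
lemma b1p0 : b1 p0 = 0 := by simp [b1, p0]
lemma b1p2 : b1 p2 = 0 := by
  have h := s3pos.ne'
  simp [b1, p2]; field_simp; norm_num
lemma b2p1 : b2 p1 = 0 := by simp [b2, p1]
lemma b2p0 : b2 p0 = 0 := by simp [b2, p0]
lemma b2p2 : b2 p2 = 1 := by
  have h := s3pos.ne'
  simp [b2, p2]; field_simp

lemma mem_Dtri_of {v : E2} (h0 : 0 ≤ 1 - b1 v - b2 v) (h1 : 0 ≤ b1 v) (h2 : 0 ≤ b2 v) :
    v ∈ Dtri := by
  have hc : Convex ℝ Dtri := convex_convexHull ℝ _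
  have m0 : p0 ∈ Dtri := subset_convexHull ℝ _ (by simp)
  have m1 : p1 ∈ Dtri := subset_convexHull ℝ _ (by simp)
  have m2 : p2 ∈ Dtri := subset_convexHull ℝ _ (by simp)
  have := hc.sum_mem (t := (Finset.univ : Finset (Fin 3)))
    (w := ![1 - b1 v - b2 v, b1 v, b2 v]) (z := ![p0, p1, p2])
    (by intro i _; fin_cases i <;> first | exact h0 | exact h1 | exact h2)
    (by simp [Fin.sum_univ_three]; ring)
    (by intro i _; fin_cases i <;> first | exact m0 | exact m1 | exact m2)
  rw [v_eq v]
  simpa [Fin.sum_univ_three] using this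

lemma of_mem_Dtri {v : E2} (h : v ∈ Dtri) : 0 ≤ 1 - b1 v - b2 v ∧ 0 ≤ b1 v ∧ 0 ≤ b2 v := by
  have : Dtri ⊆ {v | 0 ≤ 1 - b1 v - b2 v ∧ 0 ≤ b1 v ∧ 0 ≤ b2 v} := by
    apply convexHull_min
    · rintro x (rfl | rfl | rfl) <;> simp [b1p0, b1p1, b1p2, b2p0, b2p1, b2p2]
    · rintro x ⟨hx0, hx1, hx2⟩ y ⟨hy0, hy1, hy2⟩ a b ha hb hab
      simp only [mem_ofPred_eq, b1_comb, b2_comb]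
      refine ⟨?_, by positivity, by positivity⟩
      nlinarith [mul_nonneg ha hx0, mul_nonneg hb hy0]
  exact this h

lemma mem_Do_of {v : E2} (h0 : 0 < 1 - b1 v - b2 v) (h1 : 0 < b1 v) (h2 : 0 < b2 v) :
    v ∈ Do := by
  have ho : IsOpen {v : E2 | 0 < 1 - b1 v - b2 v ∧ 0 < b1 v ∧ 0 < b2 v} := by
    have c1 : Continuous b1 := by unfold b1; fun_prop
    have c2 : Continuous b2 := by unfold b2; fun_prop
    exact (isOpen_lt continuous_const ((continuous_const.sub c1).sub c2)).inter
      ((isOpen_lt continuous_const c1).inter (isOpen_lt continuous_const c2))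
  exact interior_maximal (fun x hx => mem_Dtri_of hx.1.le hx.2.1.le hx.2.2.le) ho ⟨h0, h1, h2⟩

lemma Dtri_cases {v : E2} (h : v ∈ Dtri) : v ∈ V0 ∨ v ∈ Do ∨ ∃ e ∈ E0, v ∈ eo e := by
  obtain ⟨h0, h1, h2⟩ := of_mem_Dtri h
  by_cases hV : v ∈ V0
  · exact Or.inl hV
  right
  rcases h1.eq_or_lt with h1' | h1'
  · right
    refine ⟨e02, by simp [E0], ⟨1 - b2 v, b2 v, by linarith, h2, by ring, ?_⟩, hV⟩
    conv_rhs => rw [v_eq v]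
    rw [← h1']; simp
  rcases h2.eq_or_lt with h2' | h2'
  · right
    refine ⟨e01, by simp [E0], ⟨1 - b1 v, b1 v, by linarith, h1, by ring, ?_⟩, hV⟩
    conv_rhs => rw [v_eq v]
    rw [← h2']; simp
  rcases h0.eq_or_lt with h0' | h0'
  · right
    refine ⟨e12, by simp [E0], ⟨b1 v, b2 v, h1, h2, by linarith, ?_⟩, hV⟩
    conv_rhs => rw [v_eq v]
    rw [← h0']; simp
  exact Or.inl (mem_Do_of h0' h1' h2')

lemma V0_sub : V0 ⊆ Dtri := subset_convexHull ℝ _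

lemma d01 : dist p0 p1 = 1 := by
  simp [p0, p1, EuclideanSpace.dist_eq, Fin.sum_univ_two]
lemma d12 : dist p1 p2 = 1 := by
  have h : ((1:ℝ) - 1/2)^2 + (0 - Real.sqrt 3/2)^2 = 1 := by nlinarith [s3]
  rw [EuclideanSpace.dist_eq, Fin.sum_univ_two, Real.dist_eq, Real.dist_eq, sq_abs, sq_abs]
  have : (p1 0 - p2 0)^2 + (p1 1 - p2 1)^2 = 1 := by simpa [p1, p2] using h
  rw [this]; simp
lemma d02 : dist p0 p2 = 1 := by
  have h : ((0:ℝ) - 1/2)^2 + (0 - Real.sqrt 3/2)^2 = 1 := by nlinarith [s3]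
  rw [EuclideanSpace.dist_eq, Fin.sum_univ_two, Real.dist_eq, Real.dist_eq, sq_abs, sq_abs]
  have : (p0 0 - p2 0)^2 + (p0 1 - p2 1)^2 = 1 := by simpa [p0, p2] using h
  rw [this]; simp

lemma E0_form {e : Set E2} (he : e ∈ E0) :
    ∃ a b : E2, a ∈ V0 ∧ b ∈ V0 ∧ dist a b = 1 ∧ e = segment ℝ a b := by
  rcases he with rfl | rfl | rfl
  · exact ⟨p0, p1, by simp [V0], by simp [V0], d01, rfl⟩
  · exact ⟨p1, p2, by simp [V0], by simp [V0], d12, rfl⟩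
  · exact ⟨p0, p2, by simp [V0], by simp [V0], d02, rfl⟩

lemma E0_sub {e : Set E2} (he : e ∈ E0) : e ⊆ Dtri := by
  obtain ⟨a, b, ha, hb, -, rfl⟩ := E0_form he
  exact (convex_convexHull ℝ _).segment_subset (V0_sub ha) (V0_sub hb)

lemma E0_closed {e : Set E2} (he : e ∈ E0) : IsClosed e := by
  obtain ⟨a, b, ha, hb, -, rfl⟩ := E0_form he
  rw [← convexHull_pair]
  exact ((Set.toFinite {a, b}).isCompact_convexHull (𝕜 := ℝ)).isClosed

lemma Dtri_compact : IsCompact Dtri :=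
  (Set.toFinite {p0, p1, p2}).isCompact_convexHull (𝕜 := ℝ)

lemma seg_diff {a b z w : E2} (hz : z ∈ segment ℝ a b) (hw : w ∈ segment ℝ a b) :
    ∃ c : ℝ, |c| ≤ 1 ∧ z - w = c • (b - a) := by
  rw [segment_eq_image'] at hz hw
  obtain ⟨s, hs, rfl⟩ := hz
  obtain ⟨t, ht, rfl⟩ := hw
  refine ⟨s - t, abs_le.2 ⟨by linarith [hs.1, ht.2], by linarith [hs.2, ht.1]⟩, ?_⟩
  module

lemma glue_nonexp {e e' : Set E2} (he : e ∈ E0) (he' : e' ∈ E0) (A : E2 →ᵃ[ℝ] E2)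
    (hA : A '' e = e') {z w : E2} (hz : z ∈ e) (hw : w ∈ e) : dist (A z) (A w) ≤ dist z w := by
  obtain ⟨a, b, -, -, hab, rfl⟩ := E0_form he
  obtain ⟨a', b', -, -, hab', rfl⟩ := E0_form he'
  have h1 : A a ∈ segment ℝ a' b' := hA ▸ mem_image_of_mem A (left_mem_segment ℝ a b)
  have h2 : A b ∈ segment ℝ a' b' := hA ▸ mem_image_of_mem A (right_mem_segment ℝ a b)
  obtain ⟨c, hc, hc'⟩ := seg_diff h2 h1
  obtain ⟨d, hd, hd'⟩ := seg_diff hz hw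
  have e1 : A z - A w = d • (A b - A a) := by
    have h3 : A.linear (z - w) = A z - A w := A.linearMap_vsub z w
    have h4 : A.linear (b - a) = A b - A a := A.linearMap_vsub b a
    rw [← h3, hd', map_smul, h4]
  rw [dist_eq_norm, dist_eq_norm, e1, hd', hc', norm_smul, norm_smul, norm_smul,
    ← dist_eq_norm b a, ← dist_eq_norm b' a', dist_comm b a, dist_comm b' a', hab, hab']
  simp only [Real.norm_eq_abs, mul_one]
  exact mul_le_of_le_one_right (abs_nonneg d) hc

lemma tri3 {l : Set E2 → ℝ} (h : TriIneq l) :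
    0 < l e01 ∧ 0 < l e12 ∧ 0 < l e02 ∧ l e12 < l e01 + l e02 ∧ l e01 < l e12 + l e02 ∧
      l e02 < l e01 + l e12 := by
  refine ⟨h.1 _ (by simp [E0]), h.1 _ (by simp [E0]), h.1 _ (by simp [E0]),
    h.2 e01 e02 e12 ?_, h.2 e12 e02 e01 ?_, h.2 e01 e12 e02 ?_⟩ <;>
  · ext x; simp only [E0, mem_insert_iff, mem_singleton_iff]; try tauto

def b1L : E2 →ₗ[ℝ] ℝ where
  toFun := b1
  map_add' x y := by simp [b1]; ring
  map_smul' a x := by simp [b1]; ring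
def b2L : E2 →ₗ[ℝ] ℝ where
  toFun := b2
  map_add' x y := by simp [b2]; ring
  map_smul' a x := by simp [b2]; ring

lemma exists_realizes {l : Set E2 → ℝ} (h : TriIneq l) : ∃ f : E2 →ₗ[ℝ] E2, Realizes f l := by
  obtain ⟨ha, hc, hb, h1, h2, h3⟩ := tri3 h
  set a := l e01 with ha'
  set c := l e12 with hc'
  set b := l e02 with hb'
  obtain ⟨x, hx⟩ : ∃ x, 2 * a * x = a ^ 2 + b ^ 2 - c ^ 2 :=
    ⟨(a ^ 2 + b ^ 2 - c ^ 2) / (2 * a), by field_simp⟩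
  have hx1 : x ≤ b := by
    by_contra! hlt
    nlinarith [mul_pos ha (sub_pos.2 hlt)]
  have hx2 : -b ≤ x := by
    by_contra! hlt
    nlinarith [mul_pos ha (sub_pos.2 hlt)]
  have hy : 0 ≤ b ^ 2 - x ^ 2 := by nlinarith
  have hys := Real.sq_sqrt hy
  set y := Real.sqrt (b ^ 2 - x ^ 2)
  let P : E2 := !₂[a, 0]
  let Q : E2 := !₂[x, y]
  let f : E2 →ₗ[ℝ] E2 := b1L.smulRight P + b2L.smulRight Q
  have f0 : f p0 = 0 := by simp [f, b1L, b2L, b1p0, b2p0]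
  have f1 : f p1 = P := by simp [f, b1L, b2L, b1p1, b2p1]
  have f2 : f p2 = Q := by simp [f, b1L, b2L, b1p2, b2p2]
  refine ⟨f, ?_, ?_, ?_⟩
  · rw [f0, f1, dist_zero_left, EuclideanSpace.norm_eq, Fin.sum_univ_two]
    simp [P, Real.sqrt_sq_eq_abs, abs_of_pos ha, ← ha']
  · rw [f1, f2, EuclideanSpace.dist_eq, Fin.sum_univ_two, Real.dist_eq, Real.dist_eq,
      sq_abs, sq_abs]
    have : (P 0 - Q 0) ^ 2 + (P 1 - Q 1) ^ 2 = c ^ 2 := by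
      simp only [P, Q]; simp; nlinarith
    rw [this, Real.sqrt_sq hc.le]
  · rw [f0, f2, dist_zero_left, EuclideanSpace.norm_eq, Fin.sum_univ_two]
    have : ‖Q 0‖ ^ 2 + ‖Q 1‖ ^ 2 = b ^ 2 := by
      simp only [Q, Real.norm_eq_abs, sq_abs]; simp; nlinarith
    rw [this, Real.sqrt_sq hb.le]

lemma colin_absurd {P Q : E2} {c : ℝ} (hP : P = c • Q) (h1 : dist P Q < ‖P‖ + ‖Q‖)
    (h2 : ‖P‖ < dist P Q + ‖Q‖) (h3 : ‖Q‖ < ‖P‖ + dist P Q) : False := by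
  have hd : dist P Q = |c - 1| * ‖Q‖ := by
    rw [dist_eq_norm, hP, ← Real.norm_eq_abs, ← norm_smul, sub_smul, one_smul]
  have hn : ‖P‖ = |c| * ‖Q‖ := by rw [hP, norm_smul, Real.norm_eq_abs]
  rw [hd, hn] at h1 h2 h3
  have hq := norm_nonneg Q
  rcases abs_cases c with ⟨e1, _⟩ | ⟨e1, _⟩ <;> rcases abs_cases (c - 1) with ⟨e2, _⟩ | ⟨e2, _⟩ <;>
    rw [e1, e2] at h1 h2 h3 <;> nlinarith

lemma realizes_inj {l : Set E2 → ℝ} (h : TriIneq l) {f : E2 →ₗ[ℝ] E2} (hf : Realizes f l) :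
    LinearMap.ker f = ⊥ := by
  obtain ⟨ha, hc, hb, h1, h2, h3⟩ := tri3 h
  obtain ⟨r1, r2, r3⟩ := hf
  have hp0 : p0 = 0 := by ext i; fin_cases i <;> simp [p0]
  rw [hp0, map_zero, dist_zero_left] at r1 r3
  rw [← r1, ← r2, ← r3] at h1 h2 h3
  rw [LinearMap.ker_eq_bot']
  intro v hv
  have hv' : b1 v • f p1 + b2 v • f p2 = 0 := by
    rw [← map_smul, ← map_smul, ← map_add, ← v_eq', hv]
  by_cases hz1 : b1 v = 0
  · by_cases hz2 : b2 v = 0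
    · rw [v_eq' v, hz1, hz2]; simp
    · exfalso
      rw [hz1, zero_smul, zero_add] at hv'
      have := (smul_eq_zero.1 hv').resolve_left hz2
      rw [this, norm_zero] at r3
      linarith
  · exfalso
    have hP : f p1 = (-(b2 v / b1 v)) • f p2 := by
      have : b1 v • f p1 = -(b2 v • f p2) := eq_neg_of_add_eq_zero_left hv'
      rw [neg_smul, div_eq_inv_mul, mul_smul, ← smul_neg, ← this, smul_smul,
        inv_mul_cancel₀ hz1, one_smul]
    exact colin_absurd hP h1 h2 h3

lemma dD_bounds {l : Set E2 → ℝ} (h : TriIneq l) : ∃ C > 0, ∀ x y,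
    dist x y ≤ C * dD l x y ∧ dD l x y ≤ C * dist x y := by
  have hex := exists_realizes h
  have hdd : ∀ x y, dD l x y = dist (hex.choose x) (hex.choose y) := by
    intro x y; unfold dD; rw [dif_pos hex]
  set f := hex.choose
  obtain ⟨K, hK, hK'⟩ := f.exists_antilipschitzWith (realizes_inj h hex.choose_spec)
  let F : E2 →L[ℝ] E2 := LinearMap.toContinuousLinearMap f
  have hL := F.lipschitz
  refine ⟨K + ‖F‖, by positivity, fun x y => ?_⟩
  rw [hdd]
  have h1 := hK'.le_mul_dist x y
  have h2 := hL.dist_le_mul x y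
  have h2' : dist (f x) (f y) ≤ ‖F‖ * dist x y := h2
  have : 0 ≤ dist x y := dist_nonneg
  have : 0 ≤ dist (f x) (f y) := dist_nonneg
  have : 0 ≤ (K : ℝ) := K.2
  have : 0 ≤ ‖F‖ := norm_nonneg _
  constructor <;> nlinarith

section aux
variable (T : Triangulation S n) (l : Set S → ℝ)

lemma dD_nonneg (l : Set E2 → ℝ) (x y : E2) : 0 ≤ dD l x y := by
  unfold dD; split_ifs
  · exact dist_nonneg
  · exact le_rfl

lemma dTri_nonneg (i : Fin n) (x y : S) : 0 ≤ dTri T l i x y := by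
  apply Real.sInf_nonneg
  rintro r ⟨x', _, y', _, _, _, rfl⟩
  exact dD_nonneg _ _ _

lemma dTri_le (i : Fin n) {x y : E2} (hx : x ∈ Dtri) (hy : y ∈ Dtri) :
    dTri T l i (T.σ i x) (T.σ i y) ≤ dD (lRes T l i) x y := by
  refine csInf_le ⟨0, ?_⟩ ⟨x, hx, y, hy, rfl, rfl, rfl⟩
  rintro r ⟨x', _, y', _, _, _, rfl⟩
  exact dD_nonneg _ _ _

lemma dGlue_le (i : Fin n) {x y : E2} (hx : x ∈ Dtri) (hy : y ∈ Dtri) :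
    dGlue T l (T.σ i x) (T.σ i y) ≤ dD (lRes T l i) x y := by
  refine le_trans (csInf_le ⟨0, ?_⟩ ?_) (dTri_le T l i hx hy)
  · rintro r ⟨k, c, idx, _, _, _, rfl⟩
    exact Finset.sum_nonneg fun j _ => dTri_nonneg _ _ _ _ _
  · refine ⟨1, fun m => if m = 0 then T.σ i x else T.σ i y, fun _ => i, by simp, by simp, ?_, by simp⟩
    intro j hj
    obtain rfl : j = 0 := by omega
    simp only [if_true, zero_add, one_ne_zero, if_false]
    exact ⟨mem_image_of_mem _ hx, mem_image_of_mem _ hy⟩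

lemma exists_unif_const (hl : TriIneqT T l) : ∃ C > 0, ∀ i x y,
    dist x y ≤ C * dD (lRes T l i) x y ∧ dD (lRes T l i) x y ≤ C * dist x y := by
  have h : ∀ i, TriIneq (lRes T l i) := fun i =>
    ⟨fun e he => hl.1 i e he, fun e₁ e₂ e₃ he => hl.2 i e₁ e₂ e₃ he⟩
  choose C hC hC' using fun i => dD_bounds (h i)
  have hle : ∀ i, C i ≤ 1 + ∑ j, C j := fun i => by
    have := Finset.single_le_sum (f := C) (fun j _ => (hC j).le) (Finset.mem_univ i)
    linarith
  refine ⟨1 + ∑ j, C j, by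
    have := Finset.sum_nonneg (s := Finset.univ) fun j _ => (hC j).le
    linarith, fun i x y => ⟨(hC' i x y).1.trans ?_, (hC' i x y).2.trans ?_⟩⟩
  · exact mul_le_mul_of_nonneg_right (hle i) (dD_nonneg _ _ _)
  · exact mul_le_mul_of_nonneg_right (hle i) dist_nonneg

lemma surj (x : S) : ∃ i, ∃ z ∈ Dtri, T.σ i z = x := by
  have hx : x ∈ (⋃ i, T.σ i '' V0) ∪ (⋃ i, T.σ i '' Do) ∪ (⋃ i, ⋃ e ∈ E0, T.σ i '' eo e) := by
    rw [T.cover]; trivial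
  rcases hx with (hx | hx) | hx
  · obtain ⟨i, z, hz, rfl⟩ := mem_iUnion.1 hx
    exact ⟨i, z, V0_sub hz, rfl⟩
  · obtain ⟨i, z, hz, rfl⟩ := mem_iUnion.1 hx
    exact ⟨i, z, interior_subset hz, rfl⟩
  · obtain ⟨i, hx⟩ := mem_iUnion.1 hx
    obtain ⟨e, he, z, hz, rfl⟩ := mem_iUnion₂.1 hx
    exact ⟨i, z, E0_sub he hz.1, rfl⟩

lemma compat {j k : Fin n} {z z' : E2} (hz : z ∈ Dtri) (hz' : z' ∈ Dtri)
    (h : T.σ j z = T.σ k z') :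
    (j = k ∧ z = z') ∨ (z ∈ V0 ∧ z' ∈ V0) ∨ ∃ e ∈ E0, ∃ e' ∈ E0, z ∈ e ∧
      ∃ A : E2 →ᵃ[ℝ] E2, A '' e = e' ∧ (∀ x ∈ e, T.σ k (A x) = T.σ j x) ∧ A z = z' := by
  have VI : ∀ {a b : Fin n} {u w : E2}, u ∈ V0 → w ∈ Do → T.σ a u = T.σ b w → False :=
    fun {a b u w} hu hw hh => Set.disjoint_left.1 (T.disj_vert_int b)
      (mem_iUnion.2 ⟨a, u, hu, rfl⟩) ⟨w, hw, hh.symm⟩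
  have VE : ∀ {a b : Fin n} {u w : E2} {e : Set E2}, u ∈ V0 → e ∈ E0 → w ∈ eo e →
      T.σ a u = T.σ b w → False :=
    fun {a b u w e} hu he hw hh => Set.disjoint_left.1 (T.disj_vert_edge b e he)
      (mem_iUnion.2 ⟨a, u, hu, rfl⟩) ⟨w, hw, hh.symm⟩
  have IE : ∀ {a b : Fin n} {u w : E2} {e : Set E2}, u ∈ Do → e ∈ E0 → w ∈ eo e →
      T.σ a u = T.σ b w → False :=
    fun {a b u w e} hu he hw hh => Set.disjoint_left.1 (T.disj_int_edge a b e he)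
      ⟨u, hu, rfl⟩ ⟨w, hw, hh.symm⟩
  rcases Dtri_cases hz with hz1 | hz1 | ⟨e, he, hz1⟩ <;>
  rcases Dtri_cases hz' with hz2 | hz2 | ⟨e', he', hz2⟩
  · exact Or.inr (Or.inl ⟨hz1, hz2⟩)
  · exact (VI hz1 hz2 h).elim
  · exact (VE hz1 he' hz2 h).elim
  · exact (VI hz2 hz1 h.symm).elim
  · left
    have hjk : j = k := by
      by_contra hne
      exact Set.disjoint_left.1 (T.disj_int j k hne) ⟨z, hz1, rfl⟩ ⟨z', hz2, h.symm⟩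
    subst hjk
    exact ⟨rfl, T.inj_int j hz1 hz2 h⟩
  · exact (IE hz1 he' hz2 h).elim
  · exact (VE hz2 he hz1 h.symm).elim
  · exact (IE hz2 he hz1 h.symm).elim
  · right; right
    have heq : T.σ j '' eo e = T.σ k '' eo e' := by
      refine (T.edge_eq_or_disjoint j k e he e' he').resolve_right fun hd => ?_
      exact Set.disjoint_left.1 hd ⟨z, hz1, rfl⟩ ⟨z', hz2, h.symm⟩
    obtain ⟨A, hA, hA'⟩ := T.glue j k e he e' he' heq
    refine ⟨e, he, e', he', hz1.1, A, hA, hA', ?_⟩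
    have hAz : A z ∈ e' := hA ▸ mem_image_of_mem A hz1.1
    have hs := hA' z hz1.1
    refine T.inj_edge k e' he' ⟨hAz, fun hv => VE hv he hz1 hs⟩ hz2 (hs.trans h)

def fib (x : S) (j : Fin n) : Set E2 := {w | w ∈ Dtri ∧ T.σ j w = x}

lemma fib_finite (x : S) (j : Fin n) : (fib T x j).Finite := by
  have h1 : (fib T x j ∩ V0).Finite := (Set.toFinite {p0, p1, p2}).inter_of_right _
  have h2 : (fib T x j ∩ Do).Finite := Set.Subsingleton.finite fun a ha b hb =>
    T.inj_int j ha.2 hb.2 (ha.1.2.trans hb.1.2.symm)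
  have h3 : (⋃ e ∈ E0, fib T x j ∩ eo e).Finite := by
    refine Set.Finite.biUnion (Set.toFinite {e01, e12, e02}) fun e he =>
      Set.Subsingleton.finite fun a ha b hb => 
      T.inj_edge j e he ha.2 hb.2 (ha.1.2.trans hb.1.2.symm)
  refine ((h1.union h2).union h3).subset fun w hw => ?_
  rcases Dtri_cases hw.1 with h | h | ⟨e, he, h⟩
  · exact Or.inl (Or.inl ⟨hw, h⟩)
  · exact Or.inl (Or.inr ⟨hw, h⟩)
  · exact Or.inr (mem_iUnion₂.2 ⟨e, he, hw, h⟩)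

open Filter Topology in
lemma ev_far {C : Set E2} (hC : IsClosed C) (w : E2) :
    ∀ᶠ r in 𝓝[>] (0:ℝ), w ∉ C → ∀ z ∈ C, r ≤ dist z w := by
  by_cases hw : w ∈ C
  · exact Eventually.of_forall fun r h => (h hw).elim
  obtain ⟨ε, hε, hb⟩ := Metric.isOpen_iff.1 hC.isOpen_compl w hw
  filter_upwards [Ioo_mem_nhdsGT hε] with r hr _ z hz
  by_contra! hlt
  exact hb (Metric.mem_ball.2 (hlt.trans hr.2)) hz

open Filter Topology in
lemma exists_r {U : Set S} (hU : IsOpen U) {x : S} (hx : x ∈ U) : ∃ r > 0, ∀ j, ∀ w ∈ fib T x j,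
    (∀ e ∈ E0, w ∉ e → ∀ z ∈ e, r ≤ dist z w) ∧ (∀ v ∈ V0, v ≠ w → r ≤ dist v w) ∧
    (∀ z ∈ Dtri, dist z w < r → T.σ j z ∈ U) := by
  have : ∀ᶠ r in 𝓝[>] (0:ℝ), ∀ j, ∀ w ∈ fib T x j,
    (∀ e ∈ E0, w ∉ e → ∀ z ∈ e, r ≤ dist z w) ∧ (∀ v ∈ V0, v ≠ w → r ≤ dist v w) ∧
    (∀ z ∈ Dtri, dist z w < r → T.σ j z ∈ U) := by
    rw [eventually_all]
    intro j
    rw [eventually_all_finite (fib_finite T x j)]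
    intro w hw
    refine Eventually.and ?_ (Eventually.and ?_ ?_)
    · exact (eventually_all_finite (Set.toFinite {e01, e12, e02})).2 fun e he =>
        ev_far (E0_closed he) w
    · refine (eventually_all_finite (Set.toFinite {p0, p1, p2})).2 fun v hv => ?_
      filter_upwards [ev_far (isClosed_singleton (x := v)) w] with r hr hne
      exact hr (fun h => hne (mem_singleton_iff.1 h).symm) v rfl
    · have hc := T.continuousOn j w hw.1
      have hn : U ∈ 𝓝 (T.σ j w) := hU.mem_nhds (by rw [hw.2]; exact hx)
      obtain ⟨ε, hε, hb⟩ := Metric.mem_nhdsWithin_iff.1 (hc hn)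
      filter_upwards [Ioo_mem_nhdsGT hε] with r hr z hz hd
      exact hb ⟨Metric.mem_ball.2 (hd.trans hr.2), hz⟩
  obtain ⟨r, h1, h2⟩ := (this.and self_mem_nhdsWithin).exists
  exact ⟨r, h2, h1⟩

lemma transfer {x : S} {r t : ℝ} (htr : t ≤ r)
    (hr : ∀ j, ∀ w ∈ fib T x j,
      (∀ e ∈ E0, w ∉ e → ∀ z ∈ e, r ≤ dist z w) ∧ (∀ v ∈ V0, v ≠ w → r ≤ dist v w))
    {j k : Fin n} {z z' w : E2} (hw : w ∈ fib T x j) (hz : z ∈ Dtri) (hz' : z' ∈ Dtri)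
    (h : T.σ j z = T.σ k z') (hd : dist z w < t) : ∃ w' ∈ fib T x k, dist z' w' < t := by
  rcases compat T hz hz' h with ⟨rfl, rfl⟩ | ⟨hv, hv'⟩ | ⟨e, he, e', he', hze, A, hA, hA', rfl⟩
  · exact ⟨w, hw, hd⟩
  · have hzw : z = w := by
      by_contra hne
      linarith [(hr j w hw).2 z hv hne]
    subst hzw
    refine ⟨z', ⟨hz', h.symm.trans hw.2⟩, ?_⟩
    rw [dist_self] at hd ⊢; exact hd
  · have hwe : w ∈ e := by
      by_contra hne
      linarith [(hr j w hw).1 e he hne z hze]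
    refine ⟨A w, ⟨E0_sub he' (hA ▸ mem_image_of_mem A hwe), (hA' w hwe).trans hw.2⟩, ?_⟩
    exact (glue_nonexp he he' A hA hze hwe).trans_lt hd

lemma chain_near {x : S} {r C : ℝ} (hC : 0 < C)
    (hCd : ∀ i x y, dist x y ≤ C * dD (lRes T l i) x y)
    (hr : ∀ j, ∀ w ∈ fib T x j,
      (∀ e ∈ E0, w ∉ e → ∀ z ∈ e, r ≤ dist z w) ∧ (∀ v ∈ V0, v ≠ w → r ≤ dist v w))
    {c : ℕ → S} {idx : ℕ → Fin n} (h0 : c 0 = x) (k : ℕ)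
    (hc : ∀ j < k, c j ∈ T.σ (idx j) '' Dtri ∧ c (j + 1) ∈ T.σ (idx j) '' Dtri) (t : ℝ)
    (ht : C * ∑ j ∈ Finset.range k, dTri T l (idx j) (c j) (c (j + 1)) < t) (htr : t ≤ r) :
    ∃ j, ∃ w ∈ fib T x j, ∃ z ∈ Dtri, T.σ j z = c k ∧ dist z w < t := by
  induction k generalizing t with
  | zero =>
    obtain ⟨i, z, hz, hzx⟩ := surj T x
    refine ⟨i, z, ⟨hz, hzx⟩, z, hz, hzx.trans h0.symm, ?_⟩
    simpa using ht
  | succ k ih =>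
    rw [Finset.sum_range_succ, mul_add] at ht
    set s := C * ∑ j ∈ Finset.range k, dTri T l (idx j) (c j) (c (j + 1))
    set q := dTri T l (idx k) (c k) (c (k + 1)) with hq
    have hq0 : 0 ≤ q := dTri_nonneg _ _ _ _ _
    obtain ⟨a, ha1, ha2⟩ : ∃ a, C * q < a ∧ s < t - a := 
      ⟨C * q + (t - s - C * q) / 2, by linarith, by linarith⟩
    have ha0 : 0 < a := lt_of_le_of_lt (by positivity) ha1
    obtain ⟨j, w, hw, z, hz, hzc, hzw⟩ := ih (fun j hj => hc j (by omega)) (t - a) ha2 (by linarith)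
    obtain ⟨⟨u, hu, hu'⟩, ⟨v, hv, hv'⟩⟩ := hc k (by omega)
    have hlt : q < a / C := by rw [lt_div_iff₀ hC]; linarith
    obtain ⟨_, ⟨u1, hu1, v1, hv1, hu1', hv1', rfl⟩, hd⟩ := 
      exists_lt_of_csInf_lt (s := { r | ∃ x' ∈ Dtri, ∃ y' ∈ Dtri,
        T.σ (idx k) x' = c k ∧ T.σ (idx k) y' = c (k + 1) ∧ r = dD (lRes T l (idx k)) x' y' })
        ⟨_, u, hu, v, hv, hu', hv', rfl⟩ hlt
    obtain ⟨w', hw', hd'⟩ := transfer T (by linarith : t - a ≤ r) hr hw hz hu1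
      (hzc.trans hu1'.symm) hzw
    refine ⟨idx k, w', hw', v1, hv1, hv1', ?_⟩
    rw [lt_div_iff₀ hC] at hd
    have h1 := hCd (idx k) u1 v1
    have h2 := dist_triangle v1 u1 w'
    rw [dist_comm v1 u1] at h2
    linarith

lemma chain_step {x y u : S} {j : Fin n} (h : (chainSums T l x y).Nonempty)
    (hy : y ∈ T.σ j '' Dtri) (hu : u ∈ T.σ j '' Dtri) : (chainSums T l x u).Nonempty := by
  obtain ⟨_, k, c, idx, h0, hk, hc, -⟩ := h
  refine ⟨_, k + 1, fun m => if m ≤ k then c m else u, fun m => if m < k then idx m else j,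
    by simp [h0], by simp, ?_, rfl⟩
  intro m hm
  by_cases hmk : m < k
  · simpa [hmk, hmk.le, Nat.succ_le_of_lt hmk] using hc m hmk
  · obtain rfl : m = k := by omega
    simp [hk] at hy hu ⊢
    exact ⟨hy, hu⟩

lemma chain_nonempty [T2Space S] [ConnectedSpace S] (x y : S) : (chainSums T l x y).Nonempty := by
  let R : Set S := {y | (chainSums T l x y).Nonempty}
  have himg : ∀ j, IsClosed (T.σ j '' Dtri) := fun j =>
    (Dtri_compact.image_of_continuousOn (T.continuousOn j)).isClosed
  have key : ∀ P : Set S, (∀ j, ∀ y ∈ P, ∀ u, y ∈ T.σ j '' Dtri → u ∈ T.σ j '' Dtri → u ∈ P) →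
      IsClosed P := by
    intro P hP
    have : P = ⋃ j ∈ {j | (T.σ j '' Dtri ∩ P).Nonempty}, T.σ j '' Dtri := by
      ext y
      simp only [mem_iUnion]
      constructor
      · intro hy
        obtain ⟨i, z, hz, rfl⟩ := surj T y
        exact ⟨i, ⟨_, ⟨z, hz, rfl⟩, hy⟩, z, hz, rfl⟩
      · rintro ⟨j, ⟨y', h1, h2⟩, h3⟩
        exact hP j y' h2 y h1 h3
    rw [this]
    exact (Set.toFinite _).isClosed_biUnion fun j _ => himg j
  have c1 : IsClosed R := key R fun j y hy u h1 h2 => chain_step T l hy h1 h2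
  have c2 : IsClosed Rᶜ := key Rᶜ fun j y hy u h1 h2 hu => hy (chain_step T l hu h2 h1)
  have hclopen : IsClopen R := ⟨c1, isClosed_compl_iff.1 c2⟩
  have hx : x ∈ R := by
    obtain ⟨i, z, hz, rfl⟩ := surj T x
    exact ⟨_, 0, fun _ => T.σ i z, fun _ => i, rfl, rfl, by simp, rfl⟩
  have := hclopen.eq_univ ⟨x, hx⟩
  have hy : y ∈ R := this ▸ mem_univ y
  exact hy

end aux

/-- Proposition 3.5: the topology induced on `S` by the metric `d[l]`
coincides with the original topology on `S`. -/
theorem dGlue_topology_eq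
    {S : Type} [TopologicalSpace S] [CompactSpace S] [T2Space S] [ConnectedSpace S]
    {n : ℕ} (T : Triangulation S n) (l : Set S → ℝ) (hl : TriIneqT T l) :
    ∀ U : Set S, IsOpen U ↔
      ∀ x ∈ U, ∃ ε > 0, ∀ y : S, dGlue T l x y < ε → y ∈ U := by
  intro U
  obtain ⟨C, hC, hCd⟩ := exists_unif_const T l hl
  constructor
  · intro hU x hx
    obtain ⟨r, hr, hr'⟩ := exists_r T hU hx
    refine ⟨r / C, by positivity, fun y hy => ?_⟩
    obtain ⟨_, ⟨k, c, idx, h0, hk, hc, rfl⟩, hlt⟩ :=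
      exists_lt_of_csInf_lt (chain_nonempty T l x y) hy
    rw [lt_div_iff₀ hC, mul_comm] at hlt
    obtain ⟨j, w, hw, z, hz, hzy, hd⟩ := chain_near T l hC (fun i x y => (hCd i x y).1)
      (fun j w hw => ⟨(hr' j w hw).1, (hr' j w hw).2.1⟩) h0 k hc r hlt le_rfl
    rw [← hk, ← hzy]
    exact (hr' j w hw).2.2 z hz hd
  · intro h
    rw [← isClosed_compl_iff]
    have hU : Uᶜ = ⋃ j, T.σ j '' (Dtri ∩ T.σ j ⁻¹' Uᶜ) := by
      ext y
      simp only [mem_iUnion]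
      constructor
      · intro hy
        obtain ⟨i, z, hz, rfl⟩ := surj T y
        exact ⟨i, z, ⟨hz, hy⟩, rfl⟩
      · rintro ⟨j, z, ⟨_, hz⟩, rfl⟩
        exact hz
    rw [hU]
    refine isClosed_iUnion_of_finite fun j => ?_
    have hcl : IsClosed (Dtri ∩ T.σ j ⁻¹' Uᶜ) := by
      refine isClosed_of_closure_subset fun z hz => ?_
      have hzD : z ∈ Dtri := closure_minimal inter_subset_left Dtri_compact.isClosed hz
      refine ⟨hzD, fun hzU => ?_⟩
      obtain ⟨ε, hε, hb⟩ := h _ hzU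
      obtain ⟨u, ⟨huD, huU⟩, hd⟩ := Metric.mem_closure_iff.1 hz (ε / C) (by positivity)
      refine huU (hb _ ?_)
      rw [lt_div_iff₀ hC, mul_comm] at hd
      exact (dGlue_le T l j hzD huD).trans_lt ((hCd j z u).2.trans_lt hd)
    exact ((Dtri_compact.of_isClosed_subset hcl inter_subset_left).image_of_continuousOn
      ((T.continuousOn j).mono inter_subset_left)).isClosed
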